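/- arXiv:2406.01828 — 3 statements merged into one kernel-verified Lean document; each statement's English description precedes it below -/
import Mathlib

section
/- Let T₀ ≥ 0 be a real number. Suppose that for every complex number s = σ + it with σ > 1/2 and t > T₀ at which ζ(s) ≠ 0 one has −Re(ζ'(s)/ζ(s)) ≤ (1/2)·log(t/(2π)). Then ζ has no zeros s with Re s > 1/2 and Im s > T₀. -/
open Complex Real
open Filter Topology

/-! At a zero `ρ` of finite order `n ≥ 1` one has `(s - ρ) f'(s)/f(s) → n`. Approaching `ρ` from the
left, `s = ρ - ε`, this says that `-Re(f'/f)(ρ - ε) ~ n / ε → +∞`, so no bound on `-Re(f'/f)` that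
stays finite as `s → ρ` along that horizontal segment can hold. For `ζ` the zeros have finite order,
being isolated. -/

theorem tendsto_sub_mul_logDeriv_nhdsNE {𝕜 : Type*} [NontriviallyNormedField 𝕜] [CompleteSpace 𝕜]
    {f : 𝕜 → 𝕜} {x : 𝕜} {n : ℤ} (hf : MeromorphicAt f x) (hn : meromorphicOrderAt f x = n) :
    Tendsto (fun z ↦ (z - x) * logDeriv f z) (𝓝[≠] x) (𝓝 (n : 𝕜)) := by
  obtain ⟨g, hg, hgx, hfg⟩ := (meromorphicOrderAt_eq_int_iff hf).1 hn
  have hfactor : ∀ᶠ z in 𝓝[≠] x, n + (z - x) * logDeriv g z = (z - x) * logDeriv f z := by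
    filter_upwards [logDeriv_congr_nhdsNE hfg, self_mem_nhdsWithin,
      (hg.continuousAt.eventually_ne hgx).filter_mono nhdsWithin_le_nhds,
      hg.eventually_analyticAt.filter_mono nhdsWithin_le_nhds] with z hfz hzx hgz hgan
    have hsub : z - x ≠ 0 := sub_ne_zero.2 hzx
    have hlinear : DifferentiableAt 𝕜 (fun w ↦ w - x) z := by fun_prop
    have hlogDeriv_linear : logDeriv (fun w ↦ w - x) z = (z - x)⁻¹ := by simp [logDeriv_apply]
    simp only [hfz, smul_eq_mul]
    rw [logDeriv_mul (f := fun w ↦ (w - x) ^ n) z (zpow_ne_zero n hsub) hgz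
      (hlinear.zpow (.inl hsub)) hgan.differentiableAt, logDeriv_fun_zpow hlinear, hlogDeriv_linear]
    field_simp
  have hlogDeriv_cont : ContinuousAt (logDeriv g) x :=
    hg.deriv.continuousAt.div hg.continuousAt hgx
  have hlim : Tendsto (fun z ↦ n + (z - x) * logDeriv g z) (𝓝 x) (𝓝 (n + (x - x) * logDeriv g x)) :=
    ((continuousAt_id.sub continuousAt_const).mul hlogDeriv_cont).const_add (n : 𝕜)
  rw [sub_self, zero_mul, add_zero] at hlim
  exact (hlim.mono_left nhdsWithin_le_nhds).congr' hfactor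

theorem tendsto_sub_ofReal_nhdsNE (s : ℂ) :
    Tendsto (fun ε : ℝ ↦ s - ε) (𝓝[>] 0) (𝓝[≠] s) := by
  refine tendsto_nhdsWithin_iff.2 ⟨?_, ?_⟩
  · have hcont : Continuous (fun ε : ℝ ↦ s - ε) := by fun_prop
    simpa using (hcont.tendsto 0).mono_left nhdsWithin_le_nhds
  · filter_upwards [self_mem_nhdsWithin] with ε (hε : 0 < ε)
    simpa using hε.ne'

theorem tendsto_neg_re_logDeriv_sub_ofReal_atTop {f : ℂ → ℂ} {s : ℂ}
    (hpos : 0 < meromorphicOrderAt f s) (htop : meromorphicOrderAt f s ≠ ⊤) :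
    Tendsto (fun ε : ℝ ↦ -(logDeriv f (s - ε)).re) (𝓝[>] 0) atTop := by
  have hf : MeromorphicAt f s := meromorphicAt_of_meromorphicOrderAt_ne_zero hpos.ne'
  obtain ⟨n, hn⟩ := WithTop.ne_top_iff_exists.1 htop
  have hn_pos : (0 : ℝ) < n := by
    rw [← hn] at hpos
    exact_mod_cast hpos
  have hresidue : Tendsto (fun ε : ℝ ↦ ε * -(logDeriv f (s - ε)).re) (𝓝[>] 0) (𝓝 n) := by
    simpa [Function.comp_def] using (continuous_re.tendsto _).comp
      ((tendsto_sub_mul_logDeriv_nhdsNE hf hn.symm).comp (tendsto_sub_ofReal_nhdsNE s))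
  refine (tendsto_inv_nhdsGT_zero.atTop_mul_pos hn_pos hresidue).congr' ?_
  filter_upwards [self_mem_nhdsWithin] with ε (hε : 0 < ε)
  exact inv_mul_cancel_left₀ hε.ne' _

theorem ne_zero_of_frequently_neg_re_logDeriv_le {f : ℂ → ℂ} {s : ℂ} {C : ℝ}
    (hf : AnalyticAt ℂ f s) (hne : ∀ᶠ z in 𝓝[≠] s, f z ≠ 0)
    (hC : ∃ᶠ ε : ℝ in 𝓝[>] 0, -(logDeriv f (s - ε)).re ≤ C) : f s ≠ 0 := by
  intro hzero
  have hpos : 0 < meromorphicOrderAt f s :=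
    (tendsto_zero_iff_meromorphicOrderAt_pos hf.meromorphicAt).1
      (hzero ▸ hf.continuousAt.tendsto.mono_left nhdsWithin_le_nhds)
  have htop : meromorphicOrderAt f s ≠ ⊤ :=
    (meromorphicOrderAt_ne_top_iff_eventually_ne_zero hf.meromorphicAt).2 hne
  obtain ⟨ε, hle, hgt⟩ := (hC.and_eventually
    ((tendsto_neg_re_logDeriv_sub_ofReal_atTop hpos htop).eventually_gt_atTop C)).exists
  exact hle.not_gt hgt

theorem eventually_nhdsNE_riemannZeta_ne_zero (s : ℂ) : ∀ᶠ z in 𝓝[≠] s, riemannZeta z ≠ 0 := by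
  have hcodiscrete : riemannZetaZerosᶜ ∈ codiscrete ℂ :=
    mem_codiscrete'.2 ⟨isClosed_riemannZetaZeros.isOpen_compl, by
      simpa using isDiscrete_riemannZetaZeros⟩
  have hmem : riemannZetaZerosᶜ ∈ 𝓝[≠] s := by
    simpa only [disjoint_principal_right, compl_compl] using mem_codiscrete.1 hcodiscrete s
  exact hmem

theorem spectral_flow_bound_implies_no_zeros_general (σ₀ T₀ : ℝ) (B : ℝ → ℝ)
    (hbound : ∀ σ t : ℝ, σ₀ < σ → T₀ < t → (σ + t * I : ℂ) ≠ 1 → riemannZeta (σ + t * I) ≠ 0 →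
      -(logDeriv riemannZeta (σ + t * I)).re ≤ B t) :
    ∀ s : ℂ, s ≠ 1 → σ₀ < s.re → T₀ < s.im → riemannZeta s ≠ 0 := by
  intro s hs hre him
  have hne := eventually_nhdsNE_riemannZeta_ne_zero s
  refine ne_zero_of_frequently_neg_re_logDeriv_le (C := B s.im) (analyticOn_riemannZeta s hs) hne
    (Eventually.frequently ?_)
  have hleft := tendsto_sub_ofReal_nhdsNE s
  filter_upwards [hleft.eventually hne,
    hleft.eventually ((eventually_ne_nhds hs).filter_mono nhdsWithin_le_nhds),
    (eventually_lt_nhds (sub_pos.2 hre)).filter_mono nhdsWithin_le_nhds] with ε hζ hone hε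
  have hcoord : ((s.re - ε : ℝ) + s.im * I : ℂ) = s - ε := by apply Complex.ext <;> simp
  have hle := hbound (s.re - ε) s.im (by linarith) him
  rw [hcoord] at hle
  exact hle hone hζ

/-- If for every `s = σ + it` with `σ > 1/2`, `t > T₀` and `ζ(s) ≠ 0` one has
`-Re(ζ'(s)/ζ(s)) ≤ (1/2)·log(t/(2π))`, then `ζ` has no zeros with `Re s > 1/2`, `Im s > T₀`. -/
theorem spectral_flow_bound_implies_no_zeros (T₀ : ℝ) (hT₀ : 0 ≤ T₀)
    (hbound : ∀ σ t : ℝ, 1 / 2 < σ → T₀ < t →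
      riemannZeta (σ + t * Complex.I) ≠ 0 →
      -(deriv riemannZeta (σ + t * Complex.I) / riemannZeta (σ + t * Complex.I)).re ≤
        (1 / 2) * Real.log (t / (2 * Real.pi))) :
    ∀ s : ℂ, 1 / 2 < s.re → T₀ < s.im → riemannZeta s ≠ 0 := by
  intro s hre him
  have hs : s ≠ 1 := fun h ↦ (hT₀.trans_lt him).ne' (h ▸ one_im)
  exact spectral_flow_bound_implies_no_zeros_general (1 / 2) T₀ _
    (fun σ t hσ ht _ ↦ hbound σ t hσ ht) s hs hre him
end

section
/- Assume the Riemann Hypothesis. Then there exist constants C > 0 and T₀ > 0 such that for every complex number s = σ + it with σ > 1/2 and t > T₀ one has −Re(ζ'(s)/ζ(s)) ≤ (1/2)·log(t/(2π)) + C/t². -/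
open Complex Real
open Filter Topology Set MeasureTheory Metric

/-!
Let `ξ` be the entire function of Riemann. For `0 < h ≤ 1` the quotient `ξ(s) / ξ(s + h)` is
holomorphic on `Re s ≥ 1/2 - h/2` under RH, and the functional equation together with
`ξ(conj s) = conj ξ(s)` gives it modulus `1` on the boundary line. It grows at most exponentially:
in a vertical strip `1 / ξ` is controlled by Borel–Carathéodory, and further to the right the
quotient is bounded, thanks to the beta integral for `Γ` and the Dirichlet series of `1 / ζ`.
Phragmén–Lindelöf then bounds the quotient by `1`, so `|ξ|` is nondecreasing in the real direction
and `Re (ξ'/ξ) ≥ 0` for `Re s > 1/2`; no Hadamard product is needed.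

Expanding `ξ = s (s - 1) / 2 · π^(-s/2) Γ(s/2) ζ(s)`, this bounds `-Re (ζ'/ζ)` by
`Re (1/s + 1/(s - 1)) - (log π) / 2 + Re ψ(s/2) / 2`, where `ψ` is the digamma function, and
`Re ψ(z) ≤ log (|z|² - Re z + 1) / 2`, which comes from telescoping the partial products of Euler
for `Γ`, gives the claim for `1/2 < σ ≤ 2`. For `σ ≥ 2` the Dirichlet series of `ζ'/ζ` is bounded,
whereas `log (t / 2π)` tends to infinity.
-/

/-! ### Real part of the digamma function -/

theorem hasDerivAt_log_norm {g : ℝ → ℂ} {g' : ℂ} {x : ℝ} (hg : HasDerivAt g g' x) (h0 : g x ≠ 0) :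
    HasDerivAt (fun u ↦ Real.log ‖g u‖) (g' / g x).re x := by
  have hsq := (hg.norm_sq.log (by simpa using h0)).div_const 2
  simp only [Real.log_pow] at hsq
  refine (hsq.congr_deriv ?_).congr_of_eventuallyEq (.of_forall fun u ↦ by push_cast; ring)
  have : normSq (g x) ≠ 0 := by simpa using h0
  rw [Complex.inner, Complex.div_re, Complex.sq_norm]
  simp only [mul_re, conj_re, conj_im]
  field_simp
  ring

theorem hasDerivAt_log_norm_horizontal {f : ℂ → ℂ} {x y : ℝ}
    (hf : DifferentiableAt ℂ f (x + y * I)) (h0 : f (x + y * I) ≠ 0) :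
    HasDerivAt (fun u : ℝ ↦ Real.log ‖f (u + y * I)‖) (logDeriv f (x + y * I)).re x :=
  hasDerivAt_log_norm (hf.hasDerivAt.comp_add_const (x : ℂ) (y * I)).comp_ofReal h0

theorem deriv_le_of_tendsto_of_deriv_le {ι : Type*} {l : Filter ι} [l.NeBot]
    {F F' : ι → ℝ → ℝ} {f g : ℝ → ℝ} {f' x : ℝ}
    (hF : ∀ᶠ i in l, ∀ u, x ≤ u → HasDerivAt (F i) (F' i u) u)
    (hF' : ∀ᶠ i in l, ∀ u, x ≤ u → F' i u ≤ g u)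
    (hlim : ∀ u, x ≤ u → Tendsto (F · u) l (𝓝 (f u)))
    (hg : ContinuousAt g x) (hf : HasDerivAt f f' x) : f' ≤ g x := by
  refine le_of_forall_gt_imp_ge_of_dense fun c hc ↦ ?_
  obtain ⟨d, hxd, hd⟩ : ∃ d, x < d ∧ ∀ u ∈ Icc x d, g u < c :=
    mem_nhdsGE_iff_exists_Icc_subset.1 (mem_nhdsWithin_of_mem_nhds (hg.eventually_lt_const hc))
  have hmono : MonotoneOn (fun u ↦ c * u - f u) (Icc x d) := by
    intro u hu v hv huv
    refine le_of_tendsto_of_tendsto ((hlim u hu.1).const_sub _) ((hlim v hv.1).const_sub _) ?_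
    filter_upwards [hF, hF'] with i hi hi'
    have hderiv : ∀ w ∈ Icc x d, HasDerivAt (fun w ↦ c * w - F i w) (c - F' i w) w := fun w hw ↦
      ((hasDerivAt_const_mul c).sub (hi w hw.1))
    refine monotoneOn_of_hasDerivWithinAt_nonneg (convex_Icc x d)
      (fun w hw ↦ (hderiv w hw).continuousAt.continuousWithinAt)
      (fun w hw ↦ (hderiv w (interior_subset hw)).hasDerivWithinAt) (fun w hw ↦ ?_) hu hv huv
    have hw := interior_subset hw
    linarith [hi' w hw.1, hd w hw]
  have hacc : AccPt x (𝓟 (Icc x d)) :=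
    (uniqueDiffWithinAt_iff_accPt.1 (uniqueDiffOn_Icc hxd x (left_mem_Icc.2 hxd.le)))
  have := ((hasDerivAt_const_mul c).sub hf).hasDerivWithinAt.nonneg_of_monotoneOn hacc hmono
  linarith

theorem log_add_sub_log_sub_le {q x : ℝ} (hx : 0 < x) (hq : x ^ 2 ≤ q) :
    Real.log (q + 1 + x) - Real.log (q + 1 - x) ≤ 2 * (x / q) := by
  have hq0 : 0 < q := by nlinarith
  have hm : 0 < q + 1 - x := by nlinarith [sq_nonneg (x - 1)]
  have hp : 0 < q + 1 + x := by positivity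
  -- `log y ≤ sinh (log y) = (y - y⁻¹) / 2` for `y ≥ 1`
  have hlog : Real.log ((q + 1 + x) / (q + 1 - x)) ≤
      ((q + 1 + x) / (q + 1 - x) - ((q + 1 + x) / (q + 1 - x))⁻¹) / 2 := by
    rw [← Real.sinh_log (by positivity), Real.self_le_sinh_iff]
    exact Real.log_nonneg ((one_le_div hm).2 (by linarith))
  rw [← Real.log_div hp.ne' hm.ne']
  refine hlog.trans ?_
  have hfrac : ((q + 1 + x) / (q + 1 - x) - ((q + 1 + x) / (q + 1 - x))⁻¹) / 2 =
      2 * (x * (q + 1) / ((q + 1 - x) * (q + 1 + x))) := by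
    field_simp
    ring
  rw [hfrac]
  gcongr 2 * ?_
  rw [div_le_div_iff₀ (by positivity) hq0]
  nlinarith

-- The quadratic `‖z‖² - Re z + 1 = ‖z - 1/2‖² + 3/4` is chosen for its symmetry under the shift:
-- its values at `z` and `z + 1` are `‖z‖² + 1 ∓ Re z`.
theorem log_norm_sq_add_one_sub_le {z : ℂ} (hz : 0 < z.re) :
    Real.log (‖z + 1‖ ^ 2 - (z + 1).re + 1) - Real.log (‖z‖ ^ 2 - z.re + 1) ≤ 2 * z⁻¹.re := by
  have hre : z.re ^ 2 ≤ ‖z‖ ^ 2 := by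
    rw [Complex.sq_norm, normSq_apply]
    nlinarith [sq_nonneg z.im]
  have hnorm : ‖z + 1‖ ^ 2 - (z + 1).re + 1 = ‖z‖ ^ 2 + 1 + z.re := by
    simp only [Complex.sq_norm, normSq_apply, add_re, add_im, one_re, one_im]
    ring
  rw [hnorm, sub_add_eq_add_sub, inv_re, ← Complex.sq_norm]
  exact log_add_sub_log_sub_le hz hre

theorem log_norm_sq_add_natCast_sub_le {z : ℂ} (hz : 0 < z.re) (n : ℕ) :
    Real.log (‖z + n‖ ^ 2 - (z + n).re + 1) - Real.log (‖z‖ ^ 2 - z.re + 1) ≤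
      2 * ∑ j ∈ Finset.range n, (z + j)⁻¹.re := by
  have htele := Finset.sum_range_sub (fun j : ℕ ↦ Real.log (‖z + j‖ ^ 2 - (z + j).re + 1)) n
  simp only [Nat.cast_zero, add_zero] at htele
  rw [← htele, Finset.mul_sum]
  refine Finset.sum_le_sum fun j _ ↦ ?_
  rw [Nat.cast_succ, ← add_assoc]
  exact log_norm_sq_add_one_sub_le (by simp only [add_re, natCast_re]; positivity)

theorem add_natCast_ne_zero_of_re_pos {z : ℂ} (hz : 0 < z.re) (j : ℕ) : z + j ≠ 0 := by
  intro h
  have := congrArg Complex.re h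
  simp only [add_re, natCast_re, zero_re] at this
  linarith [j.cast_nonneg (α := ℝ)]

theorem GammaSeq_ne_zero {z : ℂ} {n : ℕ} (hn : n ≠ 0) (hz : ∀ j : ℕ, z + j ≠ 0) :
    Complex.GammaSeq z n ≠ 0 := by
  have hn' : (n : ℂ) ≠ 0 := Nat.cast_ne_zero.2 hn
  have hfac : (n.factorial : ℂ) ≠ 0 := Nat.cast_ne_zero.2 n.factorial_ne_zero
  exact div_ne_zero (mul_ne_zero (by simp [cpow_eq_zero_iff, hn']) hfac)
    (Finset.prod_ne_zero_iff.2 fun j _ ↦ hz j)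

theorem differentiableAt_GammaSeq {z : ℂ} {n : ℕ} (hn : n ≠ 0) (hz : ∀ j : ℕ, z + j ≠ 0) :
    DifferentiableAt ℂ (fun w ↦ Complex.GammaSeq w n) z := by
  have hprod : ∏ j ∈ Finset.range (n + 1), (z + j) ≠ 0 :=
    Finset.prod_ne_zero_iff.2 fun j _ ↦ hz j
  have hpow : DifferentiableAt ℂ (fun w : ℂ ↦ (n : ℂ) ^ w) z :=
    differentiableAt_id.const_cpow (.inl (Nat.cast_ne_zero.2 hn))
  unfold Complex.GammaSeq
  fun_prop (disch := assumption)

theorem logDeriv_const_cpow {a : ℂ} (ha : a ≠ 0) (z : ℂ) :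
    logDeriv (fun w ↦ a ^ w) z = Complex.log a := by
  have hpow : a ^ z ≠ 0 := by simp [cpow_eq_zero_iff, ha]
  rw [logDeriv_apply, ((hasDerivAt_id' z).const_cpow (.inl ha)).deriv, mul_one,
    mul_div_cancel_left₀ _ hpow]

theorem logDeriv_GammaSeq {z : ℂ} {n : ℕ} (hn : n ≠ 0) (hz : ∀ j : ℕ, z + j ≠ 0) :
    logDeriv (fun w ↦ Complex.GammaSeq w n) z =
      Complex.log n - ∑ j ∈ Finset.range (n + 1), (z + j)⁻¹ := by
  have hn' : (n : ℂ) ≠ 0 := Nat.cast_ne_zero.2 hn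
  have hfac : (n.factorial : ℂ) ≠ 0 := Nat.cast_ne_zero.2 n.factorial_ne_zero
  have hpow : (n : ℂ) ^ z ≠ 0 := by simp [cpow_eq_zero_iff, hn']
  have hdpow : DifferentiableAt ℂ (fun w : ℂ ↦ (n : ℂ) ^ w) z :=
    differentiableAt_id.const_cpow (.inl hn')
  have hnum : (n : ℂ) ^ z * n.factorial ≠ 0 := mul_ne_zero hpow hfac
  have hden : ∏ j ∈ Finset.range (n + 1), (z + j) ≠ 0 :=
    Finset.prod_ne_zero_iff.2 fun j _ ↦ hz j
  unfold Complex.GammaSeq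
  rw [logDeriv_div z hnum hden (by fun_prop) (by fun_prop), logDeriv_mul_const z _ hfac,
    logDeriv_const_cpow hn', logDeriv_prod (fun j _ ↦ hz j) (fun j _ ↦ by fun_prop)]
  simp [logDeriv_apply]

theorem re_logDeriv_GammaSeq_le {z : ℂ} {n : ℕ} (hn : n ≠ 0) (hz : 0 < z.re) :
    (logDeriv (fun w ↦ Complex.GammaSeq w n) z).re ≤ Real.log (‖z‖ ^ 2 - z.re + 1) / 2 := by
  rw [logDeriv_GammaSeq hn (add_natCast_ne_zero_of_re_pos hz), sub_re, re_sum,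
    ← Complex.natCast_log, ofReal_re]
  have hsum := log_norm_sq_add_natCast_sub_le hz (n + 1)
  have hn0 : (0 : ℝ) < n := by positivity
  have hlog : Real.log ((n : ℝ) ^ 2) ≤
      Real.log (‖z + (n + 1 : ℕ)‖ ^ 2 - (z + (n + 1 : ℕ)).re + 1) := by
    refine Real.log_le_log (by positivity) ?_
    simp only [Complex.sq_norm, normSq_apply, add_re, add_im, natCast_re, natCast_im]
    push_cast
    nlinarith [mul_self_nonneg z.im]
  rw [Real.log_pow] at hlog
  push_cast at hlog hsum
  linarith

theorem re_digamma_le {z : ℂ} (hz : 0 < z.re) :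
    (digamma z).re ≤ Real.log (‖z‖ ^ 2 - z.re + 1) / 2 := by
  have hpos : ∀ u : ℝ, z.re ≤ u → 0 < (u + z.im * I : ℂ).re := fun u hu ↦ by
    simpa using hz.trans_le hu
  have hGamma : ∀ u : ℝ, z.re ≤ u → Complex.Gamma (u + z.im * I) ≠ 0 := fun u hu ↦
    Gamma_ne_zero_of_re_pos (hpos u hu)
  have hseq : ∀ u : ℝ, z.re ≤ u → ∀ j : ℕ, (u + z.im * I : ℂ) + j ≠ 0 := fun u hu ↦
    add_natCast_ne_zero_of_re_pos (hpos u hu)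
  have hdiff : DifferentiableAt ℂ Complex.Gamma (z.re + z.im * I) :=
    differentiableAt_Gamma _ fun m h ↦
      hseq _ le_rfl m (by rw [h, neg_add_cancel])
  have hquad : 0 < ‖z‖ ^ 2 - z.re + 1 := by
    rw [Complex.sq_norm, normSq_apply]
    nlinarith [mul_self_nonneg z.im, sq_nonneg (z.re - 1)]
  have hle := deriv_le_of_tendsto_of_deriv_le (l := atTop) (x := z.re)
    (F := fun (n : ℕ) u ↦ Real.log ‖Complex.GammaSeq (u + z.im * I) n‖)
    (f := fun u ↦ Real.log ‖Complex.Gamma (u + z.im * I)‖)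
    (g := fun u ↦ Real.log (‖(u + z.im * I : ℂ)‖ ^ 2 - u + 1) / 2)
    ((eventually_ne_atTop 0).mono fun n hn u hu ↦ hasDerivAt_log_norm_horizontal
      (f := fun w ↦ Complex.GammaSeq w n) (differentiableAt_GammaSeq hn (hseq u hu))
      (GammaSeq_ne_zero hn (hseq u hu)))
    ((eventually_ne_atTop 0).mono fun n hn u hu ↦ by
      simpa using re_logDeriv_GammaSeq_le hn (hpos u hu))
    (fun u hu ↦ (Complex.GammaSeq_tendsto_Gamma _).norm.log (norm_ne_zero_iff.2 (hGamma u hu)))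
    (by
      refine ContinuousAt.div_const (ContinuousAt.log (by fun_prop) ?_) 2
      rw [re_add_im]
      exact hquad.ne')
    (hasDerivAt_log_norm_horizontal hdiff (hGamma _ le_rfl))
  simpa only [re_add_im, ← digamma_def] using hle

/-! ### Bounds for `Γ` and `ζ` -/

theorem exists_norm_betaIntegral_le {a : ℝ} {v : ℂ} (ha : 0 < a) (hv : 0 < v.re) :
    ∃ K, ∀ u : ℂ, a ≤ u.re → ‖betaIntegral u v‖ ≤ K := by
  have hint := (betaIntegral_convergent (u := a) (by simpa using ha) hv).norm
  refine ⟨_, fun u hu ↦ intervalIntegral.norm_integral_le_of_norm_le zero_le_one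
    (ae_of_all _ fun x hx ↦ ?_) hint⟩
  rw [norm_mul, norm_mul, norm_cpow_eq_rpow_re_of_pos hx.1, norm_cpow_eq_rpow_re_of_pos hx.1]
  refine mul_le_mul_of_nonneg_right ?_ (norm_nonneg _)
  exact Real.rpow_le_rpow_of_exponent_ge hx.1 hx.2 (by simpa using hu)

theorem exists_norm_Gamma_le_mul_norm_Gamma_add {a : ℝ} {h : ℂ} (ha : 0 < a) (hh : 0 < h.re) :
    ∃ K, 0 ≤ K ∧ ∀ s : ℂ, a ≤ s.re → ‖Complex.Gamma s‖ ≤ K * ‖Complex.Gamma (s + h)‖ := by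
  obtain ⟨B, hB⟩ := exists_norm_betaIntegral_le ha hh
  have hB0 : 0 ≤ B := (norm_nonneg _).trans (hB a (by simp))
  have hΓ : 0 < ‖Complex.Gamma h‖ := norm_pos_iff.2 (Gamma_ne_zero_of_re_pos hh)
  refine ⟨B / ‖Complex.Gamma h‖, by positivity, fun s hs ↦ ?_⟩
  rw [div_mul_eq_mul_div, le_div_iff₀ hΓ, ← norm_mul,
    Gamma_mul_Gamma_eq_betaIntegral (ha.trans_le hs) hh, norm_mul, mul_comm]
  exact mul_le_mul_of_nonneg_right (hB s hs) (norm_nonneg _)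

theorem sq_norm_Gamma_one_add_mul_I {y : ℝ} (hy : y ≠ 0) :
    ‖Complex.Gamma (1 + y * I)‖ ^ 2 = π * y / Real.sinh (π * y) := by
  have hyI : (y : ℂ) * I ≠ 0 := by simpa using hy
  have hprod : Complex.Gamma (1 + y * I) * Complex.Gamma (1 - y * I) =
      (π * y / Real.sinh (π * y) : ℝ) := by
    rw [add_comm, Complex.Gamma_add_one _ hyI, mul_assoc, Complex.Gamma_mul_Gamma_one_sub,
      ← mul_assoc, Complex.sin_mul_I]
    push_cast
    field_simp
  have hconj : 1 - (y : ℂ) * I = starRingEnd ℂ (1 + y * I) := by simp [sub_eq_add_neg]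
  rw [hconj, Complex.Gamma_conj, mul_conj] at hprod
  rw [Complex.sq_norm]
  exact_mod_cast hprod

theorem sinh_le_self_mul_exp (u : ℝ) : Real.sinh u ≤ u * Real.exp u := by
  have := Real.add_one_le_exp (-(2 * u))
  have hexp : Real.exp (-u) = Real.exp u * Real.exp (-(2 * u)) := by
    rw [← Real.exp_add]
    ring_nf
  rw [Real.sinh_eq, hexp]
  nlinarith [Real.exp_pos u]

theorem exp_neg_le_norm_Gamma_one_add_mul_I (y : ℝ) :
    Real.exp (-(π * |y| / 2)) ≤ ‖Complex.Gamma (1 + y * I)‖ := by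
  rcases eq_or_ne y 0 with rfl | hy
  · simp
  have hu : 0 < π * |y| := by positivity
  have heven : π * y / Real.sinh (π * y) = π * |y| / Real.sinh (π * |y|) := by
    rcases abs_choice y with h | h <;> rw [h]
    rw [mul_neg, Real.sinh_neg, neg_div_neg_eq]
  rw [← sq_le_sq₀ (Real.exp_nonneg _) (norm_nonneg _), sq_norm_Gamma_one_add_mul_I hy, heven,
    le_div_iff₀ (Real.sinh_pos_iff.2 hu), ← Real.exp_nat_mul]
  calc Real.exp ((2 : ℕ) * -(π * |y| / 2)) * Real.sinh (π * |y|)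
      ≤ Real.exp (-(π * |y|)) * (π * |y| * Real.exp (π * |y|)) := by
        gcongr
        · exact le_of_eq (by push_cast; ring)
        · exact sinh_le_self_mul_exp _
    _ = π * |y| := by rw [mul_left_comm, ← Real.exp_add, neg_add_cancel, Real.exp_zero, mul_one]

theorem exists_norm_mellin_le {E : Type*} [NormedAddCommGroup E] [NormedSpace ℂ E] {f : ℝ → E}
    {a b : ℝ} (ha : MellinConvergent f a) (hb : MellinConvergent f b) :
    ∃ K, ∀ s : ℂ, a ≤ s.re → s.re ≤ b → ‖mellin f s‖ ≤ K := by
  have hint := ha.norm.add hb.norm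
  refine ⟨_, fun s hs₁ hs₂ ↦ norm_integral_le_of_norm_le hint
    (ae_restrict_of_forall_mem measurableSet_Ioi fun t ht ↦ ?_)⟩
  have ht : 0 < t := ht
  simp only [Pi.add_apply, norm_smul, ← add_mul, norm_cpow_eq_rpow_re_of_pos ht, sub_re, one_re,
    ofReal_re]
  refine mul_le_mul_of_nonneg_right ?_ (norm_nonneg _)
  rcases le_total 1 t with h | h
  · exact (Real.rpow_le_rpow_of_exponent_le h (by linarith)).trans
      (le_add_of_nonneg_left (by positivity))
  · exact (Real.rpow_le_rpow_of_exponent_ge ht h (by linarith)).trans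
      (le_add_of_nonneg_right (by positivity))

theorem exists_norm_completedRiemannZeta₀_le (a b : ℝ) :
    ∃ K, ∀ s : ℂ, a ≤ s.re → s.re ≤ b → ‖completedRiemannZeta₀ s‖ ≤ K := by
  have hconv (s : ℂ) : MellinConvergent (HurwitzZeta.hurwitzEvenFEPair 0).f_modif s :=
    ((HurwitzZeta.hurwitzEvenFEPair 0).isStrongFEPair_toStrongFEPair.hasMellin s).1
  obtain ⟨K, hK⟩ := exists_norm_mellin_le (hconv (a / 2 : ℝ)) (hconv (b / 2 : ℝ))
  refine ⟨K / 2, fun s hs₁ hs₂ ↦ ?_⟩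
  have hmellin : completedRiemannZeta₀ s =
      mellin (HurwitzZeta.hurwitzEvenFEPair 0).f_modif (s / 2) / 2 := rfl
  have hre : (s / 2).re = s.re / 2 := by simp
  rw [hmellin, norm_div, Complex.norm_ofNat]
  exact div_le_div_of_nonneg_right (hK _ (by linarith) (by linarith)) zero_le_two

theorem exists_norm_LSeries_le {f : ℕ → ℂ} {x : ℝ} (hf : LSeriesSummable f x) :
    ∃ K, ∀ s : ℂ, x ≤ s.re → ‖LSeries f s‖ ≤ K :=
  ⟨_, fun _ hs ↦ tsum_of_norm_bounded hf.norm.hasSum fun n ↦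
    LSeries.norm_term_le_of_re_le_re f (by simpa using hs) n⟩

theorem exists_norm_riemannZeta_le {x : ℝ} (hx : 1 < x) :
    ∃ K, ∀ s : ℂ, x ≤ s.re → ‖riemannZeta s‖ ≤ K := by
  obtain ⟨K, hK⟩ := exists_norm_LSeries_le (LSeriesSummable_one_iff.2 (by simpa using hx) :
    LSeriesSummable 1 (x : ℂ))
  exact ⟨K, fun s hs ↦ LSeries_one_eq_riemannZeta (hx.trans_le hs) ▸ hK s hs⟩

theorem exists_le_norm_riemannZeta {x : ℝ} (hx : 1 < x) :
    ∃ K > 0, ∀ s : ℂ, x ≤ s.re → K ≤ ‖riemannZeta s‖ := by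
  obtain ⟨K, hK⟩ := exists_norm_LSeries_le
    (ArithmeticFunction.LSeriesSummable_moebius_iff.2 (by simpa using hx : 1 < (x : ℂ).re))
  have hone (s : ℂ) (hs : x ≤ s.re) : 1 ≤ ‖riemannZeta s‖ * K := by
    have hmul := LSeries_one_mul_Lseries_moebius (hx.trans_le hs)
    rw [LSeries_one_eq_riemannZeta (hx.trans_le hs)] at hmul
    rw [← norm_one (α := ℂ), ← hmul, norm_mul]
    exact mul_le_mul_of_nonneg_left (hK s hs) (norm_nonneg _)
  have hK0 : 0 < K := by
    have := hone x (by simp)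
    by_contra! hK
    nlinarith [norm_nonneg (riemannZeta x)]
  exact ⟨K⁻¹, inv_pos.2 hK0, fun s hs ↦ (inv_le_iff_one_le_mul₀ hK0).2 (hone s hs)⟩

theorem exists_norm_logDeriv_riemannZeta_le {x : ℝ} (hx : 1 < x) :
    ∃ K, ∀ s : ℂ, x ≤ s.re → ‖logDeriv riemannZeta s‖ ≤ K := by
  obtain ⟨K, hK⟩ := exists_norm_LSeries_le
    (ArithmeticFunction.LSeriesSummable_vonMangoldt (by simpa using hx : 1 < (x : ℂ).re))
  refine ⟨K, fun s hs ↦ ?_⟩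
  have hK := hK s hs
  rwa [ArithmeticFunction.LSeries_vonMangoldt_eq_deriv_riemannZeta_div (hx.trans_le hs), neg_div,
    norm_neg] at hK

/-! ### Growth of holomorphic functions -/

theorem exp_neg_le_norm_of_forall_mem_ball_ne_zero {f : ℂ → ℂ} {c z : ℂ} {R r M : ℝ}
    (hf : DifferentiableOn ℂ f (ball c R)) (hne : ∀ w ∈ ball c R, f w ≠ 0) (hM : 0 < M)
    (hle : ∀ w ∈ ball c R, ‖f w‖ ≤ Real.exp M * ‖f c‖) (hrR : r < R) (hz : dist z c ≤ r) :
    Real.exp (-(2 * M * r / (R - r))) * ‖f c‖ ≤ ‖f z‖ := by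
  have hr : 0 ≤ r := dist_nonneg.trans hz
  have hR : 0 < R := hr.trans_lt hrR
  have hc : c ∈ ball c R := mem_ball_self hR
  -- `F` is a logarithm of `f` on the ball, up to an imaginary constant.
  obtain ⟨F, hF, hFre⟩ := InnerProductSpace.HarmonicOnNhd.exists_analyticOnNhd_ball_re_eq
    fun w hw ↦ (hf.analyticAt (isOpen_ball.mem_nhds hw)).harmonicAt_log_norm (hne w hw)
  have hexp (w : ℂ) (hw : w ∈ ball c R) : ‖f w‖ = Real.exp (F w - F c).re * ‖f c‖ := by
    have hlog (v : ℂ) (hv : v ∈ ball c R) : ‖f v‖ = Real.exp (F v).re :=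
      ((congrArg Real.exp (hFre hv)).trans (Real.exp_log (norm_pos_iff.2 (hne v hv)))).symm
    rw [hlog w hw, hlog c hc, ← Real.exp_add, sub_re, sub_add_cancel]
  have hmem (w : ℂ) (hw : w ∈ ball 0 R) : c + w ∈ ball c R := by simpa using hw
  have hzc : ‖z - c‖ ≤ r := by rwa [← dist_eq_norm]
  have hBC : ‖F z - F c‖ ≤ 2 * M * ‖z - c‖ / (R - ‖z - c‖) := by
    have := borelCaratheodory_zero (f := fun w ↦ F (c + w) - F c) (z := z - c) hM
      (fun w hw ↦ (((hF _ (hmem w hw)).differentiableAt.comp w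
        (by fun_prop : DifferentiableAt ℂ (c + ·) w)).sub_const _).differentiableWithinAt)
      (fun w hw ↦ by
        have := hle _ (hmem w hw)
        rwa [hexp _ (hmem w hw), mul_le_mul_iff_left₀ (norm_pos_iff.2 (hne c hc)),
          Real.exp_le_exp] at this)
      hR (by simpa using hzc.trans_lt hrR) (by simp)
    simpa using this
  rw [hexp z (mem_ball.2 (hz.trans_lt hrR))]
  gcongr
  calc -(2 * M * r / (R - r)) ≤ -(2 * M * ‖z - c‖ / (R - ‖z - c‖)) := by gcongr
    _ ≤ -‖F z - F c‖ := neg_le_neg hBC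
    _ ≤ (F z - F c).re := neg_le_of_abs_le (abs_re_le_norm _)

theorem norm_le_exp_mul_norm_of_mem_ball {f : ℂ → ℂ} {c w : ℂ} {R K L : ℝ} (hK : 0 ≤ K)
    (hup : ‖f w‖ ≤ Real.exp (K * (1 + |w.im|))) (hlow : Real.exp (-(L * (1 + |c.im|))) ≤ ‖f c‖)
    (hw : w ∈ ball c R) :
    ‖f w‖ ≤ Real.exp ((K * (1 + R) + L) * (1 + |c.im|)) * ‖f c‖ := by
  have hdist : ‖w - c‖ < R := by rwa [← dist_eq_norm]
  have him : |w.im| ≤ |c.im| + R := by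
    have := (abs_im_le_norm _).trans_lt hdist
    rw [sub_im] at this
    linarith [abs_sub_abs_le_abs_sub w.im c.im]
  calc ‖f w‖ ≤ Real.exp (K * (1 + |w.im|)) := hup
    _ ≤ Real.exp (K * ((1 + R) * (1 + |c.im|))) := by
      gcongr
      nlinarith [abs_nonneg c.im, (norm_nonneg _).trans_lt hdist]
    _ = Real.exp ((K * (1 + R) + L) * (1 + |c.im|)) * Real.exp (-(L * (1 + |c.im|))) := by
      rw [← Real.exp_add]
      ring_nf
    _ ≤ Real.exp ((K * (1 + R) + L) * (1 + |c.im|)) * ‖f c‖ := by gcongr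

theorem exists_exp_neg_le_norm_of_re_mem_Icc {f : ℂ → ℂ} {a a' b K L : ℝ} (ha : a < a')
    (hf : DifferentiableOn ℂ f {s | a < s.re}) (hne : ∀ s : ℂ, a < s.re → f s ≠ 0) (hK : 0 < K)
    (hup : ∀ s : ℂ, a < s.re → s.re < 2 * b - a → ‖f s‖ ≤ Real.exp (K * (1 + |s.im|)))
    (hL : 0 ≤ L) (hlow : ∀ s : ℂ, s.re = b → Real.exp (-(L * (1 + |s.im|))) ≤ ‖f s‖) :
    ∃ L', ∀ s : ℂ, s.re ∈ Icc a' (2 * b - a') →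
      Real.exp (-(L' * (1 + |s.im|))) ≤ ‖f s‖ := by
  set R := b - a
  set r := b - a'
  refine ⟨2 * (K * (1 + R) + L) * r / (R - r) + L, fun s ⟨hs₁, hs₂⟩ ↦ ?_⟩
  have hrR : r < R := by linarith
  have hr : 0 ≤ r := by linarith
  have hR : 0 < R := hr.trans_lt hrR
  set c : ℂ := ⟨b, s.im⟩
  have hdist : dist s c ≤ r := by
    rw [dist_of_im_eq (z := s) (w := c) rfl, Real.dist_eq, abs_le]
    constructor <;> linarith
  have hre (w : ℂ) (hw : w ∈ ball c R) : a < w.re ∧ w.re < 2 * b - a := by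
    rw [mem_ball, dist_eq_norm] at hw
    have := abs_lt.1 ((abs_re_le_norm _).trans_lt hw)
    rw [sub_re] at this
    constructor <;> linarith
  have hlow_c := hlow c rfl
  have hle (w : ℂ) (hw : w ∈ ball c R) :
      ‖f w‖ ≤ Real.exp ((K * (1 + R) + L) * (1 + |s.im|)) * ‖f c‖ :=
    norm_le_exp_mul_norm_of_mem_ball hK.le (hup w (hre w hw).1 (hre w hw).2) hlow_c hw
  calc Real.exp (-((2 * (K * (1 + R) + L) * r / (R - r) + L) * (1 + |s.im|)))
      = Real.exp (-(2 * ((K * (1 + R) + L) * (1 + |s.im|)) * r / (R - r))) *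
          Real.exp (-(L * (1 + |s.im|))) := by
        rw [← Real.exp_add]
        ring_nf
    _ ≤ Real.exp (-(2 * ((K * (1 + R) + L) * (1 + |s.im|)) * r / (R - r))) * ‖f c‖ := by
        gcongr
    _ ≤ ‖f s‖ := exp_neg_le_norm_of_forall_mem_ball_ne_zero
        (hf.mono fun w hw ↦ (hre w hw).1) (fun w hw ↦ hne w (hre w hw).1) (by positivity) hle hrR
        hdist

theorem norm_le_of_norm_le_on_vertical_line {E : Type*} [NormedAddCommGroup E] [NormedSpace ℂ E]
    {f : ℂ → E} {a B C : ℝ}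
    (hf : DifferentiableOn ℂ f {s | a ≤ s.re}) (hB : 0 ≤ B)
    (hexp : ∀ s : ℂ, a ≤ s.re → ‖f s‖ ≤ Real.exp (B * (1 + ‖s‖)))
    (hreal : IsBoundedUnder (· ≤ ·) atTop fun x : ℝ ↦ ‖f x‖)
    (hline : ∀ s : ℂ, s.re = a → ‖f s‖ ≤ C) {s : ℂ} (hs : a ≤ s.re) : ‖f s‖ ≤ C := by
  have hshift {w : ℂ} (hw : 0 ≤ w.re) : a ≤ (w + a).re := by simpa using hw
  have hd : DiffContOnCl ℂ (fun w ↦ f (w + a)) {w | 0 < w.re} := by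
    refine DifferentiableOn.diffContOnCl ?_
    rw [closure_setOfPred_lt_re]
    exact hf.comp (by fun_prop) fun w hw ↦ hshift hw
  have hgrowth : (fun w ↦ f (w + a)) =O[Bornology.cobounded ℂ ⊓ 𝓟 {w | 0 < w.re}]
      fun w ↦ Real.exp (B * ‖w‖ ^ (1 : ℝ)) := by
    refine .of_bound (Real.exp (B * (1 + |a|))) (mem_inf_of_right fun w (hw : 0 < w.re) ↦ ?_)
    change ‖f (w + a)‖ ≤ Real.exp (B * (1 + |a|)) * ‖Real.exp (B * ‖w‖ ^ (1 : ℝ))‖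
    rw [Real.norm_eq_abs, Real.abs_exp, ← Real.exp_add, Real.rpow_one, ← mul_add]
    refine (hexp _ (hshift hw.le)).trans (Real.exp_le_exp.2 (mul_le_mul_of_nonneg_left ?_ hB))
    have := norm_add_le w a
    rw [norm_real, Real.norm_eq_abs] at this
    linarith
  have hbdd : IsBoundedUnder (· ≤ ·) atTop fun x : ℝ ↦ ‖f (x + a)‖ := by
    obtain ⟨K, hK⟩ := hreal
    refine ⟨K, ?_⟩
    have := (tendsto_atTop_add_const_right atTop a tendsto_id).eventually (eventually_map.1 hK)
    simpa using this
  have := PhragmenLindelof.right_half_plane_of_bounded_on_real hd ⟨1, one_lt_two, B, hgrowth⟩ hbdd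
    (fun y ↦ hline _ (by simp)) (z := s - a) (by simpa using hs)
  simpa using this

/-! ### The function `ξ` -/

theorem Gammaℝ_conj (s : ℂ) : Gammaℝ (starRingEnd ℂ s) = starRingEnd ℂ (Gammaℝ s) := by
  have hpi : (π : ℂ).arg ≠ π := by
    rw [arg_ofReal_of_nonneg pi_pos.le]
    exact pi_pos.ne
  have hpow := cpow_conj (π : ℂ) (-s / 2) hpi
  rw [conj_ofReal] at hpow
  rw [Gammaℝ, Gammaℝ, map_mul, ← hpow, ← Complex.Gamma_conj]
  simp [Complex.conj_ofNat]

theorem norm_Gammaℝ (s : ℂ) : ‖Gammaℝ s‖ = π ^ (-s.re / 2) * ‖Complex.Gamma (s / 2)‖ := by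
  rw [Gammaℝ, norm_mul, norm_cpow_eq_rpow_re_of_pos pi_pos]
  simp

theorem exp_neg_le_norm_Gammaℝ {s : ℂ} (hs : s.re = 2) :
    π⁻¹ * Real.exp (-(π / 4 * |s.im|)) ≤ ‖Gammaℝ s‖ := by
  have hhalf : s / 2 = 1 + (s.im / 2 : ℝ) * I := by
    apply Complex.ext <;> simp [hs]
  rw [norm_Gammaℝ, hs, hhalf, neg_div, div_self two_ne_zero, Real.rpow_neg_one]
  gcongr
  refine le_trans (le_of_eq ?_) (exp_neg_le_norm_Gamma_one_add_mul_I _)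
  rw [abs_div, abs_two]
  ring_nf

theorem exists_norm_Gammaℝ_le_mul_norm_Gammaℝ_add {a h : ℝ} (ha : 0 < a) (hh : 0 < h) :
    ∃ K, 0 ≤ K ∧ ∀ s : ℂ, a ≤ s.re → ‖Gammaℝ s‖ ≤ K * ‖Gammaℝ (s + h)‖ := by
  obtain ⟨K, hK0, hK⟩ := exists_norm_Gamma_le_mul_norm_Gamma_add (h := (h / 2 : ℝ)) (half_pos ha)
    (half_pos hh)
  refine ⟨π ^ (h / 2) * K, by positivity, fun s hs ↦ ?_⟩
  have hpow : π ^ (-s.re / 2) = π ^ (h / 2) * π ^ (-(s + h).re / 2) := by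
    rw [← Real.rpow_add pi_pos, add_re, ofReal_re]
    ring_nf
  have hhalf : (s + h) / 2 = s / 2 + (h / 2 : ℝ) := by
    push_cast
    ring
  rw [norm_Gammaℝ, norm_Gammaℝ, hpow, hhalf]
  calc π ^ (h / 2) * π ^ (-(s + h).re / 2) * ‖Complex.Gamma (s / 2)‖
      ≤ π ^ (h / 2) * π ^ (-(s + h).re / 2) * (K * ‖Complex.Gamma (s / 2 + (h / 2 : ℝ))‖) := by
        gcongr
        refine hK _ ?_
        simpa using div_le_div_of_nonneg_right hs zero_le_two
    _ = _ := by ring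

theorem exists_norm_riemannZeta_le_mul_norm_riemannZeta_add {x h : ℝ} (hx : 1 < x) (hh : 0 ≤ h) :
    ∃ K, 0 ≤ K ∧ ∀ s : ℂ, x ≤ s.re → ‖riemannZeta s‖ ≤ K * ‖riemannZeta (s + h)‖ := by
  obtain ⟨K, hK⟩ := exists_norm_riemannZeta_le hx
  obtain ⟨m, hm, hm'⟩ := exists_le_norm_riemannZeta hx
  have hK0 : 0 ≤ K := (norm_nonneg _).trans (hK x (by simp))
  refine ⟨K / m, by positivity, fun s hs ↦ (hK s hs).trans ?_⟩
  rw [div_mul_eq_mul_div, le_div_iff₀ hm]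
  gcongr
  exact hm' _ (by simpa using hs.trans (le_add_of_nonneg_right hh))

theorem norm_le_norm_add_ofReal {s : ℂ} {h : ℝ} (hs : 0 ≤ s.re) (hh : 0 ≤ h) : ‖s‖ ≤ ‖s + h‖ := by
  rw [← sq_le_sq₀ (norm_nonneg _) (norm_nonneg _), Complex.sq_norm, Complex.sq_norm, normSq_apply,
    normSq_apply]
  simp only [add_re, ofReal_re, add_im, ofReal_im, add_zero]
  nlinarith

/-- Riemann's entire function `ξ(s) = ½ s (s - 1) Λ(s)`, where `Λ(s) = π^(-s/2) Γ(s/2) ζ(s)`.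
It is written with the entire part `Λ₀(s) = Λ(s) + 1/s + 1/(1 - s)` of `Λ`, so that the formula
is also correct at the poles `0` and `1` of `Λ`. -/
noncomputable def riemannXi (s : ℂ) : ℂ := (s * (s - 1) * completedRiemannZeta₀ s + 1) / 2

theorem differentiable_riemannXi : Differentiable ℂ riemannXi := by
  have := differentiable_completedZeta₀
  unfold riemannXi
  fun_prop

theorem riemannXi_one_sub (s : ℂ) : riemannXi (1 - s) = riemannXi s := by
  rw [riemannXi, riemannXi, completedRiemannZeta₀_one_sub]
  ring

theorem riemannXi_eq_Gammaℝ_mul_riemannZeta {s : ℂ} (hs : 0 < s.re) (h1 : s ≠ 1) :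
    riemannXi s = s * (s - 1) / 2 * (Gammaℝ s * riemannZeta s) := by
  have h0 : s ≠ 0 := ne_zero_of_re_pos hs
  have h1' : 1 - s ≠ 0 := sub_ne_zero.2 h1.symm
  rw [riemannZeta_def_of_ne_zero h0, mul_div_cancel₀ _ (Gammaℝ_ne_zero_of_re_pos hs),
    completedRiemannZeta_eq, riemannXi]
  field_simp
  ring

theorem riemannXi_conj (s : ℂ) : riemannXi (starRingEnd ℂ s) = starRingEnd ℂ (riemannXi s) := by
  wlog hs : 0 < s.re generalizing s
  · have := this (1 - s) (by simp; linarith)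
    rwa [map_sub, map_one, riemannXi_one_sub, riemannXi_one_sub] at this
  rcases eq_or_ne s 1 with rfl | h1
  · simp [riemannXi, Complex.conj_ofNat]
  · have h1' : starRingEnd ℂ s ≠ 1 :=
      (map_ne_one_iff _ (starRingEnd ℂ).injective).2 h1
    rw [riemannXi_eq_Gammaℝ_mul_riemannZeta hs h1,
      riemannXi_eq_Gammaℝ_mul_riemannZeta (by simpa using hs) h1', Gammaℝ_conj, riemannZeta_conj]
    simp [Complex.conj_ofNat]

theorem riemannXi_ne_zero {s : ℂ} (hs : 0 < s.re) (hζ : riemannZeta s ≠ 0) : riemannXi s ≠ 0 := by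
  rcases eq_or_ne s 1 with rfl | h1
  · simp [riemannXi]
  · rw [riemannXi_eq_Gammaℝ_mul_riemannZeta hs h1]
    exact mul_ne_zero (div_ne_zero (mul_ne_zero (ne_zero_of_re_pos hs) (sub_ne_zero.2 h1))
      two_ne_zero) (mul_ne_zero (Gammaℝ_ne_zero_of_re_pos hs) hζ)

theorem exists_norm_riemannXi_le_exp (a b : ℝ) :
    ∃ K > 0, ∀ s : ℂ, a ≤ s.re → s.re ≤ b → ‖riemannXi s‖ ≤ Real.exp (K * (1 + |s.im|)) := by
  obtain ⟨K₀, hK₀⟩ := exists_norm_completedRiemannZeta₀_le a b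
  set m := max |a| |b| + 1
  set K := m ^ 2 * |K₀| + 1
  refine ⟨K + 1, by positivity, fun s ha hb ↦ ?_⟩
  set u := 1 + |s.im|
  have hu1 : 1 ≤ u := le_add_of_nonneg_right (abs_nonneg _)
  have hnorm (w : ℂ) (hre : |w.re| ≤ m) (him : w.im = s.im) : ‖w‖ ≤ m * u := by
    have hm : 1 ≤ m := le_add_of_nonneg_left (by positivity)
    have := norm_le_abs_re_add_abs_im w
    rw [him] at this
    nlinarith [abs_nonneg s.im]
  have hre : |s.re| ≤ m - 1 := (abs_le_max_abs_abs ha hb).trans (by simp [m])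
  have hs : ‖s‖ ≤ m * u := hnorm s (by linarith) rfl
  have hs' : ‖s - 1‖ ≤ m * u := by
    refine hnorm _ ?_ (by simp)
    have := abs_sub s.re 1
    rw [abs_one] at this
    simpa using this.trans (by linarith)
  calc ‖riemannXi s‖ ≤ (‖s‖ * ‖s - 1‖ * ‖completedRiemannZeta₀ s‖ + 1) / 2 := by
        rw [riemannXi, norm_div, Complex.norm_ofNat]
        gcongr
        exact (norm_add_le _ _).trans (by simp)
    _ ≤ (m * u * (m * u) * |K₀| + u ^ 2) / 2 := by
        gcongr
        · exact (hK₀ s ha hb).trans (le_abs_self _)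
        · exact one_le_pow₀ hu1
    _ = K * (u ^ 2 / 2) := by ring
    _ ≤ Real.exp K * Real.exp u := by
        gcongr
        · linarith [Real.add_one_le_exp K]
        · linarith [Real.quadratic_le_exp_of_nonneg (zero_le_one.trans hu1)]
    _ = Real.exp (K * 1 + u) := by rw [← Real.exp_add, mul_one]
    _ ≤ Real.exp ((K + 1) * u) := by
        gcongr
        nlinarith [(by positivity : 0 < K)]

theorem exists_exp_neg_le_norm_riemannXi :
    ∃ L, 0 ≤ L ∧ ∀ s : ℂ, s.re = 2 → Real.exp (-(L * (1 + |s.im|))) ≤ ‖riemannXi s‖ := by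
  obtain ⟨m, hm, hζ⟩ := exists_le_norm_riemannZeta one_lt_two
  set c := π⁻¹ * m with hc_def
  have hc : 0 < c := by positivity
  refine ⟨|Real.log c| + π / 4, by positivity, fun s hs ↦ ?_⟩
  have hs₁ : 2 ≤ ‖s‖ := hs ▸ re_le_norm s
  have hs₂ : 1 ≤ ‖s - 1‖ := by
    refine le_trans (le_of_eq ?_) (re_le_norm (s - 1))
    rw [sub_re, hs, one_re]
    norm_num
  have h1 : s ≠ 1 := by
    rintro rfl
    norm_num at hs
  have hexponent : -((|Real.log c| + π / 4) * (1 + |s.im|)) ≤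
      Real.log c + -(π / 4 * |s.im|) := by
    nlinarith [neg_abs_le (Real.log c), pi_pos,
      mul_nonneg (abs_nonneg (Real.log c)) (abs_nonneg s.im)]
  calc Real.exp (-((|Real.log c| + π / 4) * (1 + |s.im|)))
      ≤ c * Real.exp (-(π / 4 * |s.im|)) := by
        rw [← Real.exp_log hc, ← Real.exp_add, Real.exp_log hc]
        exact Real.exp_le_exp.2 hexponent
    _ = 2 * 1 / 2 * (π⁻¹ * Real.exp (-(π / 4 * |s.im|)) * m) := by
        rw [hc_def]
        ring
    _ ≤ ‖s‖ * ‖s - 1‖ / 2 * (‖Gammaℝ s‖ * ‖riemannZeta s‖) := by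
        gcongr
        · exact exp_neg_le_norm_Gammaℝ hs
        · exact hζ s hs.ge
    _ = ‖riemannXi s‖ := by
        rw [riemannXi_eq_Gammaℝ_mul_riemannZeta (hs ▸ two_pos) h1]
        simp

theorem exists_norm_riemannXi_le_mul_norm_riemannXi_add {x h : ℝ} (hx : 1 < x) (hh : 0 < h) :
    ∃ K, 0 ≤ K ∧ ∀ s : ℂ, x ≤ s.re → ‖riemannXi s‖ ≤ K * ‖riemannXi (s + h)‖ := by
  obtain ⟨A, hA, hΓ⟩ := exists_norm_Gammaℝ_le_mul_norm_Gammaℝ_add (zero_lt_one.trans hx) hh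
  obtain ⟨B, hB, hζ⟩ := exists_norm_riemannZeta_le_mul_norm_riemannZeta_add hx hh.le
  refine ⟨A * B, by positivity, fun s hs ↦ ?_⟩
  have hs1 : 1 < s.re := hx.trans_le hs
  have hsh : 1 < (s + h).re := by simpa using hs1.trans (lt_add_of_pos_right _ hh)
  have hne {w : ℂ} (hw : 1 < w.re) : w ≠ 1 := by
    rintro rfl
    exact lt_irrefl _ hw
  have hsub : ‖s - 1‖ ≤ ‖s + h - 1‖ := by
    rw [add_sub_right_comm]
    exact norm_le_norm_add_ofReal (by simpa using hs1.le) hh.le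
  rw [riemannXi_eq_Gammaℝ_mul_riemannZeta (zero_lt_one.trans hs1) (hne hs1),
    riemannXi_eq_Gammaℝ_mul_riemannZeta (zero_lt_one.trans hsh) (hne hsh)]
  simp only [norm_mul, norm_div, Complex.norm_ofNat]
  calc ‖s‖ * ‖s - 1‖ / 2 * (‖Gammaℝ s‖ * ‖riemannZeta s‖)
      ≤ ‖s + h‖ * ‖s + h - 1‖ / 2 *
          (A * ‖Gammaℝ (s + h)‖ * (B * ‖riemannZeta (s + h)‖)) := by
        gcongr
        · exact norm_le_norm_add_ofReal (zero_lt_one.trans hs1).le hh.le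
        · exact hΓ s hs
        · exact hζ s hs
    _ = _ := by ring

theorem exists_exp_neg_le_norm_riemannXi_of_half_lt
    (hζ : ∀ s : ℂ, 1 / 2 < s.re → riemannZeta s ≠ 0) {δ : ℝ} (hδ : 0 < δ) :
    ∃ L, ∀ s : ℂ, s.re ∈ Icc (1 / 2 + δ) (7 / 2 - δ) →
      Real.exp (-(L * (1 + |s.im|))) ≤ ‖riemannXi s‖ := by
  obtain ⟨K, hK, hup⟩ := exists_norm_riemannXi_le_exp (1 / 2) (7 / 2)
  obtain ⟨L, hL, hlow⟩ := exists_exp_neg_le_norm_riemannXi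
  obtain ⟨L', hL'⟩ := exists_exp_neg_le_norm_of_re_mem_Icc (lt_add_of_pos_right (1 / 2) hδ)
    differentiable_riemannXi.differentiableOn
    (fun s hs ↦ riemannXi_ne_zero (one_half_pos.trans hs) (hζ s hs)) hK
    (fun s hs hs' ↦ hup s hs.le (by linarith)) hL hlow
  exact ⟨L', fun s hs ↦ hL' s ⟨hs.1, by linarith [hs.2]⟩⟩

theorem exists_norm_riemannXi_div_le_exp
    (hζ : ∀ s : ℂ, 1 / 2 < s.re → riemannZeta s ≠ 0) {h : ℝ} (h0 : 0 < h) (h1 : h ≤ 1) :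
    ∃ B, 0 ≤ B ∧ ∀ s : ℂ, 1 / 2 - h / 2 ≤ s.re →
      ‖riemannXi s / riemannXi (s + h)‖ ≤ Real.exp (B * (1 + ‖s‖)) := by
  obtain ⟨K, hK, hup⟩ := exists_norm_riemannXi_le_exp (1 / 2 - h / 2) 2
  obtain ⟨L, hlow⟩ := exists_exp_neg_le_norm_riemannXi_of_half_lt hζ (half_pos h0)
  obtain ⟨M, hM, hright⟩ := exists_norm_riemannXi_le_mul_norm_riemannXi_add one_lt_two h0
  refine ⟨K + |L| + M, by positivity, fun s hs ↦ ?_⟩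
  have him := abs_im_le_norm s
  rw [norm_div]
  rcases le_total s.re 2 with h2 | h2
  · have hden := hlow (s + h) (by constructor <;> rw [add_re, ofReal_re] <;> linarith)
    rw [add_im, ofReal_im, add_zero] at hden
    calc ‖riemannXi s‖ / ‖riemannXi (s + h)‖
        ≤ Real.exp (K * (1 + |s.im|)) / Real.exp (-(L * (1 + |s.im|))) := by
          gcongr
          exact hup s hs h2
      _ = Real.exp ((K + L) * (1 + |s.im|)) := by
          rw [← Real.exp_sub]
          ring_nf
      _ ≤ Real.exp ((K + |L| + M) * (1 + ‖s‖)) := by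
          refine Real.exp_le_exp.2 (mul_le_mul ?_ ?_ (by positivity) (by positivity))
          · linarith [le_abs_self L]
          · linarith
  · calc ‖riemannXi s‖ / ‖riemannXi (s + h)‖ ≤ M :=
          div_le_of_le_mul₀ (norm_nonneg _) hM (hright s h2)
      _ ≤ Real.exp M := by linarith [Real.add_one_le_exp M]
      _ ≤ Real.exp ((K + |L| + M) * (1 + ‖s‖)) := by
          gcongr
          nlinarith [norm_nonneg s, abs_nonneg L]

theorem norm_riemannXi_le_norm_riemannXi_add
    (hζ : ∀ s : ℂ, 1 / 2 < s.re → riemannZeta s ≠ 0) {h : ℝ} (h0 : 0 < h) (h1 : h ≤ 1)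
    {s : ℂ} (hs : 1 / 2 - h / 2 ≤ s.re) : ‖riemannXi s‖ ≤ ‖riemannXi (s + h)‖ := by
  obtain ⟨B, hB, hexp⟩ := exists_norm_riemannXi_div_le_exp hζ h0 h1
  obtain ⟨M, hM, hright⟩ := exists_norm_riemannXi_le_mul_norm_riemannXi_add one_lt_two h0
  have hne (w : ℂ) (hw : 1 / 2 - h / 2 ≤ w.re) : riemannXi (w + h) ≠ 0 := by
    have : 1 / 2 < (w + h).re := by
      rw [add_re, ofReal_re]
      linarith
    exact riemannXi_ne_zero (one_half_pos.trans this) (hζ _ this)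
  have hdiff : DifferentiableOn ℂ (fun w ↦ riemannXi w / riemannXi (w + h))
      {w | 1 / 2 - h / 2 ≤ w.re} :=
    differentiable_riemannXi.differentiableOn.div
      (differentiable_riemannXi.comp (by fun_prop)).differentiableOn hne
  have hreal : IsBoundedUnder (· ≤ ·) atTop
      fun x : ℝ ↦ ‖riemannXi x / riemannXi (x + h)‖ := by
    refine isBoundedUnder_of_eventually_le (a := M) ?_
    filter_upwards [eventually_ge_atTop 2] with x hx
    rw [norm_div]
    exact div_le_of_le_mul₀ (norm_nonneg _) hM (hright x hx)
  have hline (w : ℂ) (hw : w.re = 1 / 2 - h / 2) : ‖riemannXi w / riemannXi (w + h)‖ ≤ 1 := by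
    have hrefl : w + h = 1 - starRingEnd ℂ w := by
      apply Complex.ext
      · simp [hw]
        ring
      · simp
    rw [norm_div, hrefl, riemannXi_one_sub, riemannXi_conj, Complex.norm_conj]
    exact div_self_le_one _
  have hle := norm_le_of_norm_le_on_vertical_line hdiff hB hexp hreal hline hs
  rwa [norm_div, div_le_one (norm_pos_iff.2 (hne s hs))] at hle

theorem re_logDeriv_riemannXi_nonneg (hζ : ∀ s : ℂ, 1 / 2 < s.re → riemannZeta s ≠ 0) {s : ℂ}
    (hs : 1 / 2 < s.re) : 0 ≤ (logDeriv riemannXi s).re := by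
  have hne {u : ℝ} (hu : s.re ≤ u) : riemannXi (u + s.im * I) ≠ 0 := by
    have : 1 / 2 < (u + s.im * I : ℂ).re := by simpa using hs.trans_le hu
    exact riemannXi_ne_zero (one_half_pos.trans this) (hζ _ this)
  have hmono : MonotoneOn (fun u : ℝ ↦ Real.log ‖riemannXi (u + s.im * I)‖)
      (Icc s.re (s.re + 1)) := by
    intro u hu v hv huv
    refine Real.log_le_log (norm_pos_iff.2 (hne hu.1)) ?_
    rcases huv.eq_or_lt with rfl | huv
    · rfl
    have hle := norm_riemannXi_le_norm_riemannXi_add hζ (sub_pos.2 huv)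
      (by linarith [hu.1, hv.2]) (s := u + s.im * I) (by simp; linarith [hu.1])
    have hshift : (u + s.im * I : ℂ) + (v - u : ℝ) = v + s.im * I := by
      push_cast
      ring
    rwa [hshift] at hle
  have hacc : AccPt s.re (𝓟 (Icc s.re (s.re + 1))) := uniqueDiffWithinAt_iff_accPt.1
    (uniqueDiffOn_Icc (lt_add_one _) _ (left_mem_Icc.2 (le_add_of_nonneg_right zero_le_one)))
  have hderiv := hasDerivAt_log_norm_horizontal (differentiable_riemannXi _) (hne le_rfl)
  rw [re_add_im] at hderiv
  exact hderiv.hasDerivWithinAt.nonneg_of_monotoneOn hacc hmono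

theorem logDeriv_Gammaℝ {s : ℂ} (hs : 0 < s.re) :
    logDeriv Gammaℝ s = -(Real.log π / 2 : ℝ) + digamma (s / 2) / 2 := by
  have hpi : (π : ℂ) ≠ 0 := ofReal_ne_zero.2 pi_ne_zero
  have hs2 : 0 < (s / 2).re := by simpa using hs
  have hΓ : DifferentiableAt ℂ Complex.Gamma (s / 2) :=
    differentiableAt_Gamma _ fun m h ↦
      add_natCast_ne_zero_of_re_pos hs2 m (by rw [h, neg_add_cancel])
  have hpow : DifferentiableAt ℂ (fun w : ℂ ↦ (π : ℂ) ^ w) (-s / 2) :=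
    differentiableAt_id.const_cpow (.inl hpi)
  have hneg : HasDerivAt (fun w : ℂ ↦ -w / 2) (-1 / 2) s := (hasDerivAt_neg s).div_const 2
  have hhalf : HasDerivAt (fun w : ℂ ↦ w / 2) (1 / 2) s := (hasDerivAt_id s).div_const 2
  have hmul := logDeriv_mul s (f := fun w : ℂ ↦ (π : ℂ) ^ (-w / 2))
    (g := fun w ↦ Complex.Gamma (w / 2)) (by simp [cpow_eq_zero_iff, hpi])
    (Gamma_ne_zero_of_re_pos hs2) (hpow.comp s hneg.differentiableAt)
    (hΓ.comp s hhalf.differentiableAt)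
  have hpow' := logDeriv_comp (x := s) (f := fun w : ℂ ↦ (π : ℂ) ^ w) (g := fun w : ℂ ↦ -w / 2)
    hpow hneg.differentiableAt
  have hΓ' := logDeriv_comp (x := s) (g := fun w : ℂ ↦ w / 2) hΓ hhalf.differentiableAt
  rw [hneg.deriv, logDeriv_const_cpow hpi] at hpow'
  rw [hhalf.deriv, ← digamma_def] at hΓ'
  calc logDeriv Gammaℝ s = Complex.log π * (-1 / 2) + digamma (s / 2) * (1 / 2) :=
        hmul.trans (congrArg₂ (· + ·) hpow' hΓ')
    _ = -(Real.log π / 2 : ℝ) + digamma (s / 2) / 2 := by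
        rw [← ofReal_log pi_pos.le]
        push_cast
        ring

theorem re_logDeriv_Gammaℝ_le {s : ℂ} (hs : 0 < s.re) :
    (logDeriv Gammaℝ s).re ≤ -(Real.log π / 2) + Real.log (‖s‖ ^ 2 / 4 - s.re / 2 + 1) / 4 := by
  have hdig := re_digamma_le (z := s / 2) (by simpa using hs)
  rw [norm_div, Complex.norm_ofNat, div_pow, div_ofNat_re] at hdig
  rw [logDeriv_Gammaℝ hs, add_re, neg_re, ofReal_re, div_ofNat_re]
  norm_num at hdig
  linarith

theorem differentiableAt_Gammaℝ {s : ℂ} (hs : 0 < s.re) : DifferentiableAt ℂ Gammaℝ s := by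
  have h := (differentiable_Gammaℝ_inv s).inv (inv_ne_zero (Gammaℝ_ne_zero_of_re_pos hs))
  exact h.congr_of_eventuallyEq (.of_forall fun w ↦ (inv_inv (Gammaℝ w)).symm)

theorem logDeriv_riemannXi {s : ℂ} (hs : 0 < s.re) (h1 : s ≠ 1) (hζ : riemannZeta s ≠ 0) :
    logDeriv riemannXi s = s⁻¹ + (s - 1)⁻¹ + (logDeriv Gammaℝ s + logDeriv riemannZeta s) := by
  have h0 : s ≠ 0 := ne_zero_of_re_pos hs
  have h1' : s - 1 ≠ 0 := sub_ne_zero.2 h1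
  have hΓ := Gammaℝ_ne_zero_of_re_pos hs
  have hdΓ := differentiableAt_Gammaℝ hs
  have hdζ := differentiableAt_riemannZeta h1
  have hxi : riemannXi =ᶠ[𝓝 s] fun w ↦ w * (w - 1) / 2 * (Gammaℝ w * riemannZeta w) := by
    filter_upwards [(isOpen_lt continuous_const continuous_re).mem_nhds hs,
      isOpen_ne.mem_nhds h1] with w hw hw1 using riemannXi_eq_Gammaℝ_mul_riemannZeta hw hw1
  have hquad : logDeriv (fun w : ℂ ↦ w * (w - 1) / 2) s = s⁻¹ + (s - 1)⁻¹ := by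
    simp only [div_eq_mul_inv]
    rw [logDeriv_mul_const s _ (inv_ne_zero two_ne_zero),
      logDeriv_mul s h0 h1' (by fun_prop) (by fun_prop)]
    simp [logDeriv_apply]
  rw [logDeriv_apply, hxi.deriv_eq, hxi.eq_of_nhds, ← logDeriv_apply,
    logDeriv_mul s (f := fun w ↦ w * (w - 1) / 2) (g := fun w ↦ Gammaℝ w * riemannZeta w)
      (by simp [h0, h1']) (mul_ne_zero hΓ hζ) (by fun_prop) (hdΓ.mul hdζ), hquad,
    logDeriv_mul s hΓ hζ hdΓ hdζ]

theorem re_inv_le {s : ℂ} {c : ℝ} (hre : s.re ≤ c) (hc : 0 ≤ c) (him : s.im ≠ 0) :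
    s⁻¹.re ≤ c / s.im ^ 2 := by
  rw [inv_re]
  gcongr
  rw [normSq_apply]
  nlinarith [mul_self_nonneg s.re]

theorem log_sq_div_four_add_one_le {t : ℝ} (ht : 0 < t) :
    Real.log (t ^ 2 / 4 + 1) ≤ 2 * Real.log (t / 2) + 4 / t ^ 2 := by
  have hfac : t ^ 2 / 4 + 1 = (t / 2) ^ 2 * (1 + 4 / t ^ 2) := by
    field_simp
    ring
  rw [hfac, Real.log_mul (by positivity) (by positivity), Real.log_pow]
  have := Real.log_le_sub_one_of_pos (x := 1 + 4 / t ^ 2) (by positivity)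
  push_cast
  linarith

theorem neg_re_logDeriv_riemannZeta_le (hζ : ∀ s : ℂ, 1 / 2 < s.re → riemannZeta s ≠ 0) {s : ℂ}
    (hs : 1 / 2 < s.re) (h1 : s ≠ 1) :
    -(logDeriv riemannZeta s).re ≤ s⁻¹.re + (s - 1)⁻¹.re - Real.log π / 2 +
      Real.log (‖s‖ ^ 2 / 4 - s.re / 2 + 1) / 4 := by
  have hs0 : 0 < s.re := one_half_pos.trans hs
  have hxi := re_logDeriv_riemannXi_nonneg hζ hs
  rw [logDeriv_riemannXi hs0 h1 (hζ s hs)] at hxi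
  simp only [add_re] at hxi
  linarith [re_logDeriv_Gammaℝ_le hs0]

theorem neg_re_logDeriv_riemannZeta_le_of_re_le_two
    (hζ : ∀ s : ℂ, 1 / 2 < s.re → riemannZeta s ≠ 0) {s : ℂ} (hs : 1 / 2 < s.re) (hs2 : s.re ≤ 2)
    (him : 0 < s.im) :
    -(logDeriv riemannZeta s).re ≤ Real.log (s.im / (2 * π)) / 2 + 4 / s.im ^ 2 := by
  have h1 : s ≠ 1 := by
    rintro rfl
    simp at him
  have hinv := re_inv_le hs2 zero_le_two him.ne'
  have hinv' : (s - 1)⁻¹.re ≤ 1 / s.im ^ 2 := by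
    simpa using re_inv_le (s := s - 1) (c := 1) (by rw [sub_re, one_re]; linarith) zero_le_one
      (by simpa using him.ne')
  have hquad : 0 < ‖s‖ ^ 2 / 4 - s.re / 2 + 1 ∧
      ‖s‖ ^ 2 / 4 - s.re / 2 + 1 ≤ s.im ^ 2 / 4 + 1 := by
    rw [Complex.sq_norm, normSq_apply]
    constructor <;> nlinarith [sq_nonneg (s.re - 1)]
  have hlog := (Real.log_le_log hquad.1 hquad.2).trans (log_sq_div_four_add_one_le him)
  have hsplit : Real.log (s.im / (2 * π)) = Real.log (s.im / 2) - Real.log π := by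
    rw [← div_div, Real.log_div (by positivity) pi_ne_zero]
  have hfrac : 2 / s.im ^ 2 + 1 / s.im ^ 2 + 4 / s.im ^ 2 / 4 = 4 / s.im ^ 2 := by ring
  linarith [neg_re_logDeriv_riemannZeta_le hζ hs h1]

theorem riemannZeta_ne_zero_of_half_lt_re
    (hRH : ∀ ρ : ℂ, riemannZeta ρ = 0 → 0 < ρ.re → ρ.re < 1 → ρ.re = 1 / 2) {s : ℂ}
    (hs : 1 / 2 < s.re) : riemannZeta s ≠ 0 := by
  rcases le_or_gt 1 s.re with h1 | h1
  · exact riemannZeta_ne_zero_of_one_le_re h1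
  · exact fun h ↦ hs.ne' (hRH s h (one_half_pos.trans hs) h1)

/-- Assuming the Riemann Hypothesis, there exist `C > 0` and `T₀ > 0` such that
for every `s = σ + it` with `σ > 1/2` and `t > T₀`,
`-Re(ζ'(s)/ζ(s)) ≤ (1/2)·log(t/(2π)) + C/t²`. -/
theorem rh_implies_spectral_flow_bound
    (hRH : ∀ ρ : ℂ, riemannZeta ρ = 0 → 0 < ρ.re → ρ.re < 1 → ρ.re = 1 / 2) :
    ∃ C > (0 : ℝ), ∃ T₀ > (0 : ℝ), ∀ σ t : ℝ, 1 / 2 < σ → T₀ < t →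
      -(deriv riemannZeta (σ + t * Complex.I) / riemannZeta (σ + t * Complex.I)).re ≤
        (1 / 2) * Real.log (t / (2 * Real.pi)) + C / t ^ 2 := by
  obtain ⟨K, hK⟩ := exists_norm_logDeriv_riemannZeta_le one_lt_two
  refine ⟨4, four_pos, 2 * π * Real.exp (2 * K), by positivity, fun σ t hσ ht ↦ ?_⟩
  have ht0 : 0 < t := lt_trans (by positivity) ht
  rw [← logDeriv_apply, one_div_mul_eq_div]
  rcases le_total σ 2 with h2 | h2
  · simpa using neg_re_logDeriv_riemannZeta_le_of_re_le_two
      (fun s ↦ riemannZeta_ne_zero_of_half_lt_re hRH) (s := σ + t * I) (by simpa using hσ)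
      (by simpa using h2) (by simpa using ht0)
  · have hlog : 2 * K ≤ Real.log (t / (2 * π)) := by
      rw [Real.le_log_iff_exp_le (by positivity), le_div_iff₀' (by positivity)]
      exact ht.le
    calc -(logDeriv riemannZeta (σ + t * I)).re ≤ ‖logDeriv riemannZeta (σ + t * I)‖ :=
          (neg_le_abs _).trans (abs_re_le_norm _)
      _ ≤ K := hK _ (by simpa using h2)
      _ ≤ Real.log (t / (2 * π)) / 2 := by linarith
      _ ≤ Real.log (t / (2 * π)) / 2 + 4 / t ^ 2 := le_add_of_nonneg_right (by positivity)
end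

section
/- Let X be a Dirichlet character modulo q with q ≥ 1, let L(s, X) denote its analytically continued L-function and L'(s,X) the derivative in s, and let T₀ > 0. Suppose that for every complex number s = σ + it with σ > 1/2 and t > T₀ at which L(s,X) ≠ 0 one has −Re(L'(s,X)/L(s,X)) ≤ (1/2)·log(q·t/(2π)). Then L(·,X) has no zeros s with Re s > 1/2 and Im s > T₀. -/
open Complex Real

/-!
Restrict `L(·, X)` to a horizontal line, `u σ = L(σ + it, X)`. A bound `-Re (L'/L) ≤ B` says
`Re (conj u * u') ≥ -B * |u|²`, which also holds (trivially) where `u` vanishes. Hence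
`|u σ|² * exp (2Bσ)` is nondecreasing, and a zero of `u` propagates to the left. The zero of `L` is
then not isolated, so `L` vanishes identically, contradicting its nonvanishing on `Re s ≥ 1`.
Only the existence of some `B` for each line matters, not its dependence on `q` and `t`.
-/

open Filter Set Topology

section OneSidedGronwall

variable {F : Type*} [NormedAddCommGroup F] [InnerProductSpace ℝ F] {u u' : ℝ → F} {B : ℝ}

theorem monotoneOn_norm_sq_mul_exp_of_neg_mul_norm_sq_le_inner {D : Set ℝ} (hD : Convex ℝ D)
    (hcont : ContinuousOn u D) (hderiv : ∀ x ∈ interior D, HasDerivAt u (u' x) x)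
    (hB : ∀ x ∈ interior D, -(B * ‖u x‖ ^ 2) ≤ inner ℝ (u x) (u' x)) :
    MonotoneOn (fun x ↦ ‖u x‖ ^ 2 * Real.exp (2 * B * x)) D := by
  have hweighted : ∀ x ∈ interior D, HasDerivAt (fun x ↦ ‖u x‖ ^ 2 * Real.exp (2 * B * x))
      (2 * (inner ℝ (u x) (u' x) + B * ‖u x‖ ^ 2) * Real.exp (2 * B * x)) x := fun x hx ↦ by
    have hexp : HasDerivAt (fun x ↦ Real.exp (2 * B * x))
        (Real.exp (2 * B * x) * (2 * B)) x := by
      simpa using ((hasDerivAt_id x).const_mul (2 * B)).exp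
    exact ((hderiv x hx).norm_sq.mul hexp).congr_deriv (by ring)
  refine monotoneOn_of_hasDerivWithinAt_nonneg hD (by fun_prop)
    (fun x hx ↦ (hweighted x hx).hasDerivWithinAt) fun x hx ↦ ?_
  have : 0 ≤ inner ℝ (u x) (u' x) + B * ‖u x‖ ^ 2 := by linarith [hB x hx]
  positivity

theorem eqOn_zero_Ioc_of_neg_mul_norm_sq_le_inner {a b : ℝ}
    (hcont : ContinuousOn u (Ioc a b)) (hderiv : ∀ x ∈ Ioo a b, HasDerivAt u (u' x) x)
    (hB : ∀ x ∈ Ioo a b, -(B * ‖u x‖ ^ 2) ≤ inner ℝ (u x) (u' x)) (hb : u b = 0) :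
    EqOn u 0 (Ioc a b) := fun x hx ↦ by
  have hmono := monotoneOn_norm_sq_mul_exp_of_neg_mul_norm_sq_le_inner (convex_Ioc a b) hcont
    (by rwa [interior_Ioc]) (by rwa [interior_Ioc])
  have hle : ‖u x‖ ^ 2 * Real.exp (2 * B * x) ≤ 0 := by
    simpa [hb] using hmono hx (right_mem_Ioc.2 (hx.1.trans_le hx.2)) hx.2
  have hsq : ‖u x‖ ^ 2 ≤ 0 := nonpos_of_mul_nonpos_left hle (Real.exp_pos _)
  simpa using hsq.antisymm (sq_nonneg _)

end OneSidedGronwall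

theorem inner_eq_re_div_mul_norm_sq {w : ℂ} (hw : w ≠ 0) (w' : ℂ) :
    inner ℝ w w' = (w' / w).re * ‖w‖ ^ 2 := by
  have hmul : w' * (starRingEnd ℂ) w = w' / w * (‖w‖ ^ 2 : ℝ) := by
    rw [ofReal_pow, ← mul_conj']
    field_simp
  rw [Complex.inner, hmul, re_mul_ofReal]

theorem neg_mul_norm_sq_le_inner_of_neg_re_div_le {w w' : ℂ} {B : ℝ}
    (hB : w ≠ 0 → -(w' / w).re ≤ B) : -(B * ‖w‖ ^ 2) ≤ inner ℝ w w' := by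
  rcases eq_or_ne w 0 with rfl | hw
  · simp
  · rw [inner_eq_re_div_mul_norm_sq hw, ← neg_mul]
    gcongr
    exact neg_le.1 (hB hw)

theorem eventually_eq_zero_of_neg_re_deriv_div_le {f : ℂ → ℂ} {s : ℂ} {B : ℝ}
    (hf : AnalyticAt ℂ f s)
    (hB : ∀ᶠ σ : ℝ in 𝓝[<] s.re, f (σ + s.im * I) ≠ 0 →
      -(deriv f (σ + s.im * I) / f (σ + s.im * I)).re ≤ B)
    (hs : f s = 0) : ∀ᶠ z in 𝓝 s, f z = 0 := by
  have hline : Tendsto (fun σ : ℝ ↦ (σ + s.im * I : ℂ)) (𝓝 s.re) (𝓝 s) := by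
    have : Continuous fun σ : ℝ ↦ (σ + s.im * I : ℂ) := by fun_prop
    simpa only [re_add_im] using this.tendsto s.re
  obtain ⟨a, ha, hIoc⟩ := exists_Ioc_subset_of_mem_nhds
    ((hline.eventually hf.eventually_analyticAt).and (eventually_nhdsWithin_iff.1 hB))
    (exists_lt s.re)
  have hderiv : ∀ σ ∈ Ioc a s.re,
      HasDerivAt (fun σ : ℝ ↦ f (σ + s.im * I)) (deriv f (σ + s.im * I)) σ := fun σ hσ ↦
    ((hIoc hσ).1.differentiableAt.hasDerivAt.comp_add_const (σ : ℂ) _).comp_ofReal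
  have hzero : EqOn (fun σ : ℝ ↦ f (σ + s.im * I)) 0 (Ioc a s.re) :=
    eqOn_zero_Ioc_of_neg_mul_norm_sq_le_inner (B := B)
      (fun σ hσ ↦ (hderiv σ hσ).continuousAt.continuousWithinAt)
      (fun σ hσ ↦ hderiv σ (Ioo_subset_Ioc_self hσ))
      (fun σ hσ ↦ neg_mul_norm_sq_le_inner_of_neg_re_div_le
        ((hIoc (Ioo_subset_Ioc_self hσ)).2 hσ.2))
      (by simpa using hs)
  have hleft : Tendsto (fun σ : ℝ ↦ (σ + s.im * I : ℂ)) (𝓝[<] s.re) (𝓝[≠] s) :=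
    tendsto_nhdsWithin_iff.2 ⟨hline.mono_left nhdsWithin_le_nhds,
      eventually_mem_nhdsWithin.mono fun σ (hσ : σ < s.re) h ↦ hσ.ne (by simpa using congrArg re h)⟩
  have hzero_left : ∀ᶠ σ : ℝ in 𝓝[<] s.re, f (σ + s.im * I) = 0 :=
    mem_of_superset (Ioc_mem_nhdsLT ha) hzero
  exact hf.frequently_zero_iff_eventually_zero.1 (hleft.frequently hzero_left.frequently)

theorem analyticOnNhd_LFunction {q : ℕ} [NeZero q] (X : DirichletCharacter ℂ q) :
    AnalyticOnNhd ℂ X.LFunction {1}ᶜ :=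
  DifferentiableOn.analyticOnNhd
    (fun z hz ↦ (X.differentiableAt_LFunction z (Or.inl hz)).differentiableWithinAt)
    isOpen_compl_singleton

theorem not_eventually_LFunction_eq_zero {q : ℕ} [NeZero q] (X : DirichletCharacter ℂ q) {s : ℂ}
    (hs : s ≠ 1) : ¬ ∀ᶠ z in 𝓝 s, X.LFunction z = 0 := fun hzero ↦ by
  have hconn : IsPreconnected ({1}ᶜ : Set ℂ) :=
    (isConnected_compl_singleton_of_one_lt_rank (by simp [rank_real_complex]) 1).isPreconnected
  have htwo : X.LFunction 2 = 0 :=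
    (analyticOnNhd_LFunction X).eqOn_zero_of_preconnected_of_eventuallyEq_zero hconn hs hzero
      (by simp)
  exact X.LFunction_ne_zero_of_one_le_re (Or.inr (by simp)) (by simp) htwo

theorem grh_spectral_flow_bound_implies_no_zeros_general {q : ℕ} [NeZero q]
    (X : DirichletCharacter ℂ q) {s : ℂ} (hs : X ≠ 1 ∨ s ≠ 1) {B : ℝ}
    (hB : ∀ᶠ σ : ℝ in 𝓝[<] s.re, X.LFunction (σ + s.im * I) ≠ 0 →
      -(deriv X.LFunction (σ + s.im * I) / X.LFunction (σ + s.im * I)).re ≤ B) :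
    X.LFunction s ≠ 0 := fun hzero ↦ by
  have hs1 : s ≠ 1 := fun h ↦ X.LFunction_ne_zero_of_one_le_re hs (by simp [h]) hzero
  exact not_eventually_LFunction_eq_zero X hs1 <|
    eventually_eq_zero_of_neg_re_deriv_div_le (analyticOnNhd_LFunction X s hs1) hB hzero

/-- For a Dirichlet character `X` mod `q ≥ 1`, if for every `s = σ + it` with
`σ > 1/2`, `t > T₀` and `L(s,X) ≠ 0` one has `-Re(L'(s,X)/L(s,X)) ≤ (1/2)·log(q·t/(2π))`,
then `L(·,X)` has no zeros `s` with `Re s > 1/2` and `Im s > T₀`. -/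
theorem grh_spectral_flow_bound_implies_no_zeros
    (q : ℕ) [NeZero q] (hq : 1 ≤ q) (X : DirichletCharacter ℂ q)
    (T₀ : ℝ) (hT₀ : 0 < T₀)
    (hbound : ∀ σ t : ℝ, 1 / 2 < σ → T₀ < t →
      X.LFunction (σ + t * Complex.I) ≠ 0 →
      -(deriv X.LFunction (σ + t * Complex.I) /
          X.LFunction (σ + t * Complex.I)).re ≤
        (1 / 2) * Real.log (q * t / (2 * Real.pi))) :
    ∀ s : ℂ, 1 / 2 < s.re → T₀ < s.im → X.LFunction s ≠ 0 := fun s hre him ↦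
  grh_spectral_flow_bound_implies_no_zeros_general X
    (Or.inr fun h ↦ (hT₀.trans him).ne' (by simp [h])) <|
    (eventually_nhdsWithin_of_eventually_nhds (lt_mem_nhds hre)).mono
      fun σ hσ ↦ hbound σ s.im hσ him
end
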